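/- For all integers L, i, j, k with i, j, k ≥ 0 and L ≥ i + j + k, the identity \sum_{τ ≥ 0} q^{τ(L+2) - T_τ + T_{i-τ} + T_{j-τ} + T_{k-τ}} [L-τ; τ] [L-2τ; i-τ] [L-i-τ; j-τ] [L-i-j; k-τ] = q^{T_i + T_j + T_k} [L-k; i] [L-i; j] [L-j; k] holds as an identity of polynomials in q, where [m; r] denotes the Gaussian binomial coefficient and the sum on the left runs over 0 ≤ τ ≤ min(i, j, k). -/

import Mathlib

open Finset

/-- `(q)_n = (q;q)_n = ∏_{t=0}^{n-1} (1 - q^{t+1})` in `ℚ(q)`. -/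
noncomputable def qPoch (n : ℕ) : RatFunc ℚ :=
  ∏ t ∈ Finset.range n, (1 - (RatFunc.X : RatFunc ℚ) ^ (t + 1))

/-- The Gaussian (q-)binomial coefficient `[m; r] = (q)_m / ((q)_r (q)_{m-r})` for
`0 ≤ r ≤ m`, and `0` otherwise. -/
noncomputable def qbin (m r : ℤ) : RatFunc ℚ :=
  if 0 ≤ r ∧ r ≤ m then qPoch m.toNat / (qPoch r.toNat * qPoch (m - r).toNat) else 0

/-- `T n = n(n+1)/2`, the n-th triangular number (on `ℤ`, the division is exact). -/
def triZ (n : ℤ) : ℤ := n * (n + 1) / 2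

/-- `[n] = 1 - q^n` for an integer `n`. -/
noncomputable def gqn (n : ℤ) : RatFunc ℚ := 1 - (RatFunc.X : RatFunc ℚ) ^ n

/-- `(q)_n` for integer `n`, with truncation. -/
noncomputable def gfac (n : ℤ) : RatFunc ℚ := qPoch n.toNat

/-- `1 / (q)_n`, zero for negative `n`. -/
noncomputable def grf (n : ℤ) : RatFunc ℚ := if 0 ≤ n then (qPoch n.toNat)⁻¹ else 0

theorem gX_ne : (RatFunc.X : RatFunc ℚ) ≠ 0 := RatFunc.X_ne_zero

theorem gone_sub_ne (n : ℕ) : (1 - (RatFunc.X : RatFunc ℚ) ^ (n + 1)) ≠ 0 := by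
  intro h
  have h1 : algebraMap (Polynomial ℚ) (RatFunc ℚ) (1 - Polynomial.X ^ (n + 1)) = 0 := by
    rw [map_sub, map_pow, map_one, RatFunc.algebraMap_X]
    exact h
  have h2 : (1 - Polynomial.X ^ (n + 1) : Polynomial ℚ) = 0 :=
    (map_eq_zero_iff _ (RatFunc.algebraMap_injective ℚ)).1 h1
  have h3 := congrArg (Polynomial.eval 0) h2
  simp at h3

theorem gqPoch_ne (n : ℕ) : qPoch n ≠ 0 := by
  unfold qPoch
  exact Finset.prod_ne_zero_iff.2 fun t _ => gone_sub_ne t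

theorem gfac_ne (n : ℤ) : gfac n ≠ 0 := gqPoch_ne _

theorem gqn_ne {n : ℤ} (hn : 0 < n) : gqn n ≠ 0 := by
  obtain ⟨m, rfl⟩ : ∃ m : ℕ, n = ((m + 1 : ℕ) : ℤ) := ⟨n.toNat - 1, by omega⟩
  unfold gqn
  rw [zpow_natCast]
  exact gone_sub_ne m

theorem gqn_zero : gqn 0 = 0 := by simp [gqn]

theorem gfac_succ {n : ℤ} (hn : 0 ≤ n) : gfac (n + 1) = gqn (n + 1) * gfac n := by
  obtain ⟨m, rfl⟩ := Int.eq_ofNat_of_zero_le hn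
  have h : ((m : ℤ) + 1).toNat = m + 1 := by omega
  unfold gfac gqn
  rw [h, Int.toNat_natCast, qPoch, Finset.prod_range_succ, ← qPoch, mul_comm]
  congr 2

theorem grf_pred (n : ℤ) : grf (n - 1) = gqn n * grf n := by
  rcases lt_trichotomy n 0 with h | h | h
  · simp [grf, not_le.2 h, show ¬ (1 ≤ n) by omega]
  · subst h
    simp [grf, gqn]
  · have h1 := gfac_succ (n := n - 1) (by omega)
    rw [sub_add_cancel] at h1
    have h2 : grf n = (gfac n)⁻¹ := by simp [grf, gfac, h.le]
    have h3 : grf (n - 1) = (gfac (n - 1))⁻¹ := by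
      simp [grf, gfac, show 1 ≤ n by omega]
    rw [h2, h3, h1]
    have := gqn_ne h
    have := gfac_ne (n - 1)
    field_simp

theorem grf_neg {n : ℤ} (hn : n < 0) : grf n = 0 := by simp [grf, not_le.2 hn]

theorem grf_nonneg {n : ℤ} (hn : 0 ≤ n) : grf n = (gfac n)⁻¹ := by simp [grf, gfac, hn]

/-- The summand. -/
noncomputable def gt (N i j k τ : ℤ) : RatFunc ℚ :=
  (RatFunc.X : RatFunc ℚ) ^ (τ * (N + τ)) * gfac (N + i + j + k - τ) * grf τ * grf (i - τ) *
    grf (j - τ) * grf (k - τ) * grf (N + τ)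

/-- The telescoping companion (up to sign). -/
noncomputable def gG (N i j k τ : ℤ) : RatFunc ℚ :=
  (RatFunc.X : RatFunc ℚ) ^ (k + 1 - τ + τ * (N + τ)) * gfac (N + i + j + k + 1 - τ) *
    grf (τ - 1) * grf (i - τ) * grf (j - τ) * grf (k + 1 - τ) * grf (N + τ - 1)

theorem gpoly (N i j k τ : ℤ) :
    gqn (k + 1) * gqn (N + k + 1) * gqn (N + i + j + k - τ + 1) -
      gqn (N + j + k + 1) * gqn (N + i + k + 1) * gqn (k + 1 - τ) =
    (RatFunc.X : RatFunc ℚ) ^ (k + 1 - τ) * gqn τ * gqn (N + τ) * gqn (N + i + j + k - τ + 1) -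
      (RatFunc.X : RatFunc ℚ) ^ (N + k + τ + 1) * gqn (i - τ) * gqn (j - τ) *
        gqn (k + 1 - τ) := by
  obtain ⟨a, rfl⟩ : ∃ a, i = a + τ := ⟨i - τ, by ring⟩
  obtain ⟨b, rfl⟩ : ∃ b, j = b + τ := ⟨j - τ, by ring⟩
  obtain ⟨c, rfl⟩ : ∃ c, k = c + τ := ⟨k - τ, by ring⟩
  have e1 : N + (a + τ) + (b + τ) + (c + τ) - τ + 1 = N + a + b + c + τ + τ + 1 := by ring
  have e2 : c + τ + 1 - τ = c + 1 := by ring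
  rw [e1, e2, add_sub_cancel_right, add_sub_cancel_right]
  unfold gqn
  simp only [zpow_add₀ gX_ne, zpow_one]
  ring

theorem gstep (N i j k τ : ℤ) (h : 0 ≤ N + i + j + k - τ) :
    gqn (k + 1) * gqn (N + k + 1) * gt N i j (k + 1) τ -
      gqn (N + j + k + 1) * gqn (N + i + k + 1) * gt N i j k τ =
    gG N i j k τ - gG N i j k (τ + 1) := by
  have hp := gpoly N i j k τ
  unfold gt gG
  have e1 : N + i + j + (k + 1) - τ = N + i + j + k - τ + 1 := by ring
  have e2 : N + i + j + k + 1 - τ = N + i + j + k - τ + 1 := by ring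
  have e3 : N + i + j + k + 1 - (τ + 1) = N + i + j + k - τ := by ring
  have e4 : k + 1 - (τ + 1) = k + 1 - τ - 1 := by ring
  have e5 : k - τ = k + 1 - τ - 1 := by ring
  have e6 : N + (τ + 1) - 1 = N + τ := by ring
  have e7 : τ + 1 - 1 = τ := by ring
  have e8 : i - (τ + 1) = i - τ - 1 := by ring
  have e9 : j - (τ + 1) = j - τ - 1 := by ring
  have e10 : k + 1 - τ - 1 + (τ + 1) * (N + (τ + 1)) = (N + k + τ + 1) + τ * (N + τ) := by ring
  rw [e1, e2, e3, e4, e5, e6, e7, e8, e9, e10, gfac_succ h, grf_pred (k + 1 - τ),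
    grf_pred (i - τ), grf_pred (j - τ), grf_pred τ, grf_pred (N + τ),
    zpow_add₀ gX_ne (k + 1 - τ), zpow_add₀ gX_ne (N + k + τ + 1)]
  linear_combination ((RatFunc.X : RatFunc ℚ) ^ (τ * (N + τ)) * gfac (N + i + j + k - τ) *
    grf τ * grf (i - τ) * grf (j - τ) * grf (k + 1 - τ) * grf (N + τ)) * hp

theorem gsum_step (N i j k : ℕ) :
    gqn (k + 1) * gqn (N + k + 1) * ∑ τ ∈ range (i + 1), gt N i j (k + 1) τ =
      gqn (N + j + k + 1) * gqn (N + i + k + 1) * ∑ τ ∈ range (i + 1), gt N i j k τ := by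
  rw [← sub_eq_zero, mul_sum, mul_sum, ← sum_sub_distrib]
  have h : ∀ τ ∈ range (i + 1),
      gqn (k + 1) * gqn (N + k + 1) * gt N i j (k + 1) τ -
        gqn (N + j + k + 1) * gqn (N + i + k + 1) * gt N i j k τ =
      gG N i j k (τ : ℕ) - gG N i j k ((τ + 1 : ℕ) : ℤ) := by
    intro τ hτ
    have := mem_range.1 hτ
    rw [gstep N i j k τ (by omega)]
    push_cast
    rfl
  rw [sum_congr rfl h, sum_range_sub' (fun τ : ℕ => gG N i j k (τ : ℤ))]
  have h0 : gG N i j k ((0 : ℕ) : ℤ) = 0 := by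
    simp [gG, grf_neg (show (-1 : ℤ) < 0 by norm_num)]
  have h1 : gG N i j k ((i + 1 : ℕ) : ℤ) = 0 := by
    simp [gG, grf_neg (show (-1 : ℤ) < 0 by norm_num)]
  rw [h0, h1, sub_zero]

theorem gmain (N i j k : ℕ) :
    ∑ τ ∈ range (i + 1), gt N i j k τ =
      gfac (N + i + j) * gfac (N + j + k) * gfac (N + i + k) /
        (gfac i * gfac j * gfac k * gfac (N + k) * gfac (N + j) * gfac (N + i)) := by
  induction k with
  | zero =>
    rw [sum_range_succ', sum_eq_zero]
    · have e0 : gfac 0 = 1 := by simp [gfac, qPoch]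
      have e1 : grf 0 = 1 := by simp [grf, qPoch]
      simp only [gt]
      push_cast
      simp only [zero_mul, zpow_zero, add_zero, sub_zero, e0, e1]
      rw [grf_nonneg (by omega), grf_nonneg (by omega), grf_nonneg (by omega)]
      have := gfac_ne N
      have := gfac_ne i
      have := gfac_ne j
      have := gfac_ne (N + i)
      have := gfac_ne (N + j)
      field_simp
      try ring
    · intro τ _
      simp only [gt]
      rw [grf_neg (n := ((0 : ℕ) : ℤ) - ((τ + 1 : ℕ) : ℤ)) (by push_cast; omega)]
      ring
  | succ k ih =>
    have hs := gsum_step N i j k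
    rw [ih] at hs
    push_cast
    have n1 : gqn ((k : ℤ) + 1) ≠ 0 := gqn_ne (by omega)
    have n2 : gqn ((N : ℤ) + k + 1) ≠ 0 := gqn_ne (by omega)
    apply mul_left_cancel₀ (mul_ne_zero n1 n2)
    rw [hs, ← add_assoc, ← add_assoc, ← add_assoc, gfac_succ (n := (N : ℤ) + j + k) (by omega),
      gfac_succ (n := (N : ℤ) + i + k) (by omega), gfac_succ (n := (k : ℤ)) (by omega),
      gfac_succ (n := (N : ℤ) + k) (by omega)]
    have := gfac_ne N
    have := gfac_ne i
    have := gfac_ne j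
    have := gfac_ne k
    have := gfac_ne (N + i)
    have := gfac_ne (N + j)
    have := gfac_ne (N + k)
    field_simp

theorem gtri (n : ℤ) : 2 * triZ n = n * (n + 1) :=
  Int.mul_ediv_cancel' (Int.even_mul_succ_self n).two_dvd

theorem gqbin {m r : ℤ} (h0 : 0 ≤ r) (h1 : r ≤ m) :
    qbin m r = gfac m / (gfac r * gfac (m - r)) := by
  simp [qbin, gfac, h0, h1]

theorem gterm (N i j k τ : ℤ) (hN : 0 ≤ N) (h0 : 0 ≤ τ) (hi : τ ≤ i) (hj : τ ≤ j) (hk : τ ≤ k)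
    (L : ℤ) (hL : L = N + i + j + k) :
    (RatFunc.X : RatFunc ℚ) ^
          (τ * (L + 2) - triZ τ + triZ (i - τ) + triZ (j - τ) + triZ (k - τ)) *
        qbin (L - τ) τ * qbin (L - 2 * τ) (i - τ) * qbin (L - i - τ) (j - τ) *
        qbin (L - i - j) (k - τ) =
      (RatFunc.X : RatFunc ℚ) ^ (triZ i + triZ j + triZ k) * gt N i j k τ := by
  have he : τ * (L + 2) - triZ τ + triZ (i - τ) + triZ (j - τ) + triZ (k - τ) =
      (triZ i + triZ j + triZ k) + τ * (N + τ) := by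
    apply mul_left_cancel₀ (two_ne_zero (α := ℤ))
    subst hL
    linear_combination -gtri τ + gtri (i - τ) + gtri (j - τ) + gtri (k - τ) - gtri i - gtri j -
      gtri k
  rw [he, zpow_add₀ gX_ne, gqbin (by omega) (by omega), gqbin (by omega) (by omega),
    gqbin (by omega) (by omega), gqbin (by omega) (by omega)]
  unfold gt
  rw [grf_nonneg (by omega), grf_nonneg (by omega), grf_nonneg (by omega), grf_nonneg (by omega),
    grf_nonneg (by omega)]
  have e1 : L - τ - τ = L - 2 * τ := by ring
  have e2 : L - 2 * τ - (i - τ) = L - i - τ := by ring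
  have e3 : L - i - τ - (j - τ) = L - i - j := by ring
  have e4 : L - i - j - (k - τ) = N + τ := by rw [hL]; ring
  rw [e1, e2, e3, e4, ← hL]
  have := gfac_ne (L - 2 * τ)
  have := gfac_ne (L - i - τ)
  have := gfac_ne (L - i - j)
  have := gfac_ne (N + τ)
  have := gfac_ne τ
  have := gfac_ne (i - τ)
  have := gfac_ne (j - τ)
  have := gfac_ne (k - τ)
  field_simp

/-- The `L = M` case of the double bounded Göllnitz identity, evaluated by the
q-Pfaff–Saalschütz summation: for `i, j, k ≥ 0` and `L ≥ i + j + k`,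
`∑_{τ=0}^{min(i,j,k)} q^{τ(L+2) - T_τ + T_{i-τ} + T_{j-τ} + T_{k-τ}}
    [L-τ; τ] [L-2τ; i-τ] [L-i-τ; j-τ] [L-i-j; k-τ]
  = q^{T_i+T_j+T_k} [L-k; i] [L-i; j] [L-j; k]`. -/
theorem gollnitz_equal_bounds_identity (L i j k : ℤ)
    (hi : 0 ≤ i) (hj : 0 ≤ j) (hk : 0 ≤ k) (hL : i + j + k ≤ L) :
    ∑ τ ∈ Finset.Icc (0 : ℤ) (min i (min j k)),
      (RatFunc.X : RatFunc ℚ) ^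
          (τ * (L + 2) - triZ τ + triZ (i - τ) + triZ (j - τ) + triZ (k - τ)) *
        qbin (L - τ) τ * qbin (L - 2 * τ) (i - τ) * qbin (L - i - τ) (j - τ) *
        qbin (L - i - j) (k - τ) =
    (RatFunc.X : RatFunc ℚ) ^ (triZ i + triZ j + triZ k) *
      (qbin (L - k) i * qbin (L - i) j * qbin (L - j) k) := by
  obtain ⟨N, hN⟩ : ∃ N : ℤ, L = N + i + j + k := ⟨L - i - j - k, by ring⟩
  have hN0 : 0 ≤ N := by omega
  have hs : ∑ τ ∈ Finset.Icc (0 : ℤ) (min i (min j k)),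
      (RatFunc.X : RatFunc ℚ) ^
          (τ * (L + 2) - triZ τ + triZ (i - τ) + triZ (j - τ) + triZ (k - τ)) *
        qbin (L - τ) τ * qbin (L - 2 * τ) (i - τ) * qbin (L - i - τ) (j - τ) *
        qbin (L - i - j) (k - τ) =
      ∑ τ ∈ Finset.Icc (0 : ℤ) (min i (min j k)),
        (RatFunc.X : RatFunc ℚ) ^ (triZ i + triZ j + triZ k) * gt N i j k τ := by
    refine sum_congr rfl fun τ hτ => ?_
    rw [mem_Icc] at hτ
    exact gterm N i j k τ hN0 hτ.1 (by omega) (by omega) (by omega) L hN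
  rw [hs, ← mul_sum]
  congr 1
  have hsub : ∑ τ ∈ Finset.Icc (0 : ℤ) (min i (min j k)), gt N i j k τ =
      ∑ τ ∈ Finset.Icc (0 : ℤ) i, gt N i j k τ := by
    apply sum_subset
    · intro τ hτ
      rw [mem_Icc] at hτ ⊢
      omega
    · intro τ h1 h2
      rw [mem_Icc] at h1 h2
      unfold gt
      by_cases hj' : j < τ
      · rw [grf_neg (n := j - τ) (by omega)]
        ring
      · rw [grf_neg (n := k - τ) (by omega)]
        ring
  rw [hsub]
  lift N to ℕ using hN0
  lift i to ℕ using hi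
  lift j to ℕ using hj
  lift k to ℕ using hk
  have hr : ∑ τ ∈ Finset.Icc (0 : ℤ) (i : ℤ), gt N i j k τ =
      ∑ τ ∈ range (i + 1), gt N i j k (τ : ℤ) := by
    symm
    refine sum_bij (fun τ _ => (τ : ℤ)) ?_ ?_ ?_ ?_
    · intro τ hτ
      rw [mem_range] at hτ
      rw [mem_Icc]
      omega
    · intro a _ b _ h
      exact_mod_cast h
    · intro b hb
      rw [mem_Icc] at hb
      exact ⟨b.toNat, by rw [mem_range]; omega, by omega⟩
    · intro τ _
      rfl
  rw [hr, gmain, gqbin (by omega) (by omega), gqbin (by omega) (by omega),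
    gqbin (by omega) (by omega)]
  have e1 : L - k = N + i + j := by rw [hN]; ring
  have e2 : L - i = N + j + k := by rw [hN]; ring
  have e3 : L - j = N + i + k := by rw [hN]; ring
  have e4 : (N : ℤ) + i + j - i = N + j := by ring
  have e5 : (N : ℤ) + j + k - j = N + k := by ring
  have e6 : (N : ℤ) + i + k - k = N + i := by ring
  rw [e1, e2, e3, e4, e5, e6]
  have := gfac_ne i
  have := gfac_ne j
  have := gfac_ne k
  have := gfac_ne (N + i)
  have := gfac_ne (N + j)
  have := gfac_ne (N + k)
  field_simp
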